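/- arXiv:0805.1272 — 2 statements merged into one kernel-verified Lean document; each statement's English description precedes it below -/
import Mathlib

section
/- For any integers m ≥ 2 and n ≥ 1, the sum over all complete m-ary trees T with n internal vertices of the product over all internal vertices v of T of (x + 1/𝓗_v) equals ((x+1)/n!) · ∏_{i=1}^{n-1} ((mn+1-i)(x+1) − (m−1)i), as an identity of polynomials in x over ℚ. -/
open Polynomial Finset

/-- A complete `m`-ary tree: a `leaf` is an external vertex and a `node`
has exactly `m` linearly ordered subtrees. -/
inductive MTree (m : ℕ) : Type
  | leaf : MTree m
  | node : (Fin m → MTree m) → MTree m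

namespace MTree

/-- The number of internal vertices of a complete `m`-ary tree. -/
def internals {m : ℕ} : MTree m → ℕ
  | leaf => 0
  | node c => 1 + ∑ i, (c i).internals

/-- The first kind of hook length of the root of `node c`: one plus the number of
internal vertices of all subtrees except the rightmost one. -/
def hook1 {m : ℕ} (c : Fin m → MTree m) : ℕ :=
  1 + ∑ i ∈ Finset.univ.filter (fun i : Fin m => (i : ℕ) + 1 < m), (c i).internals

/-- The product of `f (𝓗_v)` over all internal vertices `v` of a complete `m`-ary
tree, where `𝓗_v` is the first kind of hook length. -/
def hookProd1 {m : ℕ} {R : Type*} [CommSemiring R] (f : ℕ → R) : MTree m → R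
  | leaf => 1
  | node c => f (hook1 c) * ∏ i, hookProd1 f (c i)

/-- The number of internal vertices of the `(m+1-|S|)`-ary tree `T^S` obtained from a
complete `(m+1)`-ary tree `T` by recursively deleting, for every `r ∈ S ⊆ [m]`,
the `r`-th subtree of every remaining internal vertex (the label `r ∈ {1,…,m}`
corresponds to the child with index `r - 1`, i.e. to `Fin.castSucc` of `Fin m`). -/
def internalsS {m : ℕ} (S : Finset (Fin m)) : MTree (m + 1) → ℕ
  | leaf => 0
  | node c => 1 + ∑ i ∈ (S.image Fin.castSucc)ᶜ, internalsS S (c i)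

/-- The product of `f (ℍ_v^S)` over all internal vertices `v` of a complete
`(m+1)`-ary tree, where `ℍ_v^S` is the second kind of hook length. -/
def hookProdS {m : ℕ} {R : Type*} [CommSemiring R] (S : Finset (Fin m)) (f : ℕ → R) :
    MTree (m + 1) → R
  | leaf => 1
  | node c => f (internalsS S (node c)) * ∏ i, hookProdS S f (c i)

end MTree

/-! ### Weighted generating functions -/

/-- Generating function of a weighted class with a size function. -/
noncomputable def gser {α : Type} (sz : α → ℕ) (w : α → ℚ[X]) : PowerSeries ℚ[X] :=
  PowerSeries.mk fun n => ∑ᶠ a ∈ {a : α | sz a = n}, w a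

theorem gser_coeff {α : Type} (sz : α → ℕ) (w : α → ℚ[X])
    (h : ∀ n, {a : α | sz a = n}.Finite) (n : ℕ) :
    PowerSeries.coeff n (gser sz w) = ∑ a ∈ (h n).toFinset, w a := by
  rw [gser, PowerSeries.coeff_mk, finsum_mem_eq_finite_toFinset_sum _ (h n)]

theorem fin_prod {α β : Type} (s1 : α → ℕ) (s2 : β → ℕ)
    (h1 : ∀ n, {a : α | s1 a = n}.Finite) (h2 : ∀ n, {a : β | s2 a = n}.Finite) (n : ℕ) :
    {p : α × β | s1 p.1 + s2 p.2 = n}.Finite := by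
  have : {p : α × β | s1 p.1 + s2 p.2 = n} ⊆
      ⋃ q ∈ antidiagonal n, {a : α | s1 a = q.1} ×ˢ {a : β | s2 a = q.2} := by
    rintro ⟨a, b⟩ h
    simp only [Set.mem_iUnion]
    exact ⟨(s1 a, s2 b), by simpa using h, rfl, rfl⟩
  exact Set.Finite.subset
    (Set.Finite.biUnion (Finset.finite_toSet _) fun q _ => (h1 _).prod (h2 _)) this

theorem gser_prod {α β : Type} (s1 : α → ℕ) (s2 : β → ℕ) (w1 : α → ℚ[X]) (w2 : β → ℚ[X])
    (h1 : ∀ n, {a : α | s1 a = n}.Finite) (h2 : ∀ n, {a : β | s2 a = n}.Finite) :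
    gser (fun p : α × β => s1 p.1 + s2 p.2) (fun p => w1 p.1 * w2 p.2)
      = gser s1 w1 * gser s2 w2 := by
  ext1 n
  rw [gser_coeff _ _ (fin_prod s1 s2 h1 h2), PowerSeries.coeff_mul]
  rw [← Finset.sum_fiberwise_of_maps_to (s := (fin_prod s1 s2 h1 h2 n).toFinset)
    (t := antidiagonal n) (g := fun p => (s1 p.1, s2 p.2))
    (by intro p hp; simpa using hp)]
  refine Finset.sum_congr rfl fun q hq => ?_
  rw [gser_coeff _ _ h1, gser_coeff _ _ h2, Finset.sum_mul_sum, ← Finset.sum_product']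
  refine Finset.sum_congr ?_ fun _ _ => rfl
  ext ⟨a, b⟩
  simp only [HasAntidiagonal.mem_antidiagonal] at hq
  simp only [mem_filter, Set.Finite.mem_toFinset, Set.mem_ofPred_eq, mem_product, Prod.ext_iff]
  omega

theorem gser_equiv {α β : Type} (e : α ≃ β) (s : β → ℕ) (w : β → ℚ[X]) :
    gser (fun a => s (e a)) (fun a => w (e a)) = gser s w := by
  ext1 n
  simp only [gser, PowerSeries.coeff_mk]
  exact finsum_mem_eq_of_bijOn (f := fun a => w (e a)) (g := w) e
    ⟨fun a ha => ha, e.injective.injOn, fun b hb => ⟨e.symm b, by simpa using hb, by simp⟩⟩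
    (fun _ _ => rfl)

theorem fin_pi {α : Type} (s : α → ℕ) (h : ∀ n, {a : α | s a = n}.Finite) (k n : ℕ) :
    {c : Fin k → α | ∑ i, s (c i) = n}.Finite := by
  have : {c : Fin k → α | ∑ i, s (c i) = n} ⊆
      Set.pi Set.univ fun _ => ⋃ q ∈ Finset.range (n + 1), {a : α | s a = q} := by
    intro c hc i _
    have : s (c i) ≤ ∑ i, s (c i) :=
      Finset.single_le_sum (f := fun i => s (c i)) (fun _ _ => Nat.zero_le _) (mem_univ i)
    simp only [Set.mem_ofPred_eq] at hc
    simp only [Set.mem_iUnion]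
    exact ⟨s (c i), by simp only [Finset.mem_range]; omega, rfl⟩
  exact Set.Finite.subset
    (Set.Finite.pi fun _ => Set.Finite.biUnion (Finset.finite_toSet _) fun q _ => h _) this

theorem gser_pi {α : Type} (s : α → ℕ) (w : α → ℚ[X]) (h : ∀ n, {a : α | s a = n}.Finite)
    (k : ℕ) :
    gser (fun c : Fin k → α => ∑ i, s (c i)) (fun c => ∏ i, w (c i)) = gser s w ^ k := by
  induction k with
  | zero =>
    ext1 n
    simp only [gser, PowerSeries.coeff_mk, pow_zero, PowerSeries.coeff_one]
    rw [finsum_mem_eq_finite_toFinset_sum _ (Set.toFinite _)]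
    by_cases hn : n = 0
    · subst hn; simp
    · simp [hn, Ne.symm hn]
  | succ k ih =>
    rw [pow_succ', ← ih, ← gser_prod _ _ _ _ h (fin_pi s h k), ← gser_equiv
      (Fin.consEquiv fun _ : Fin (k+1) => α)]
    simp [Fin.consEquiv, Fin.sum_univ_succ, Fin.prod_univ_succ]

namespace MTree

theorem fin_internals (m n : ℕ) : {T : MTree m | T.internals = n}.Finite := by
  induction n using Nat.strong_induction_on with
  | _ n ih =>
    have : {T : MTree m | T.internals = n} ⊆ {leaf} ∪ node ''
        (Set.pi Set.univ fun _ => ⋃ q ∈ Set.Iio n, {T : MTree m | T.internals = q}) := by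
      intro T hT
      cases T with
      | leaf => simp
      | node c =>
        right
        refine ⟨c, fun i _ => ?_, rfl⟩
        have : (c i).internals ≤ ∑ i, (c i).internals :=
          Finset.single_le_sum (f := fun i => (c i).internals)
            (fun _ _ => Nat.zero_le _) (mem_univ i)
        simp only [Set.mem_ofPred_eq, internals] at hT
        simp only [Set.mem_iUnion]
        exact ⟨(c i).internals, by simp only [Set.mem_Iio]; omega, rfl⟩
    refine Set.Finite.subset ((Set.finite_singleton _).union (Set.Finite.image _ ?_)) this
    exact Set.Finite.pi fun _ => Set.Finite.biUnion (Set.finite_Iio n) fun q hq => ih q hq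

theorem hook1_snoc {k : ℕ} (c : Fin k → MTree (k + 1)) (T : MTree (k + 1)) :
    hook1 (Fin.snoc c T : Fin (k + 1) → MTree (k + 1)) = 1 + ∑ i, (c i).internals := by
  simp [hook1, Finset.sum_filter, Fin.sum_univ_castSucc]

/-- The functional equation of the tree generating function. -/
theorem gser_tree (k : ℕ) (f : ℕ → ℚ[X]) :
    gser (internals (m := k + 1)) (hookProd1 f) = 1 + PowerSeries.X *
      ((PowerSeries.mk fun a => f (1 + a) *
        PowerSeries.coeff a (gser (internals (m := k + 1)) (hookProd1 f) ^ k)) *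
        gser (internals (m := k + 1)) (hookProd1 f)) := by
  have hf := fin_internals (k + 1)
  have hB : (PowerSeries.mk fun a => f (1 + a) *
        PowerSeries.coeff a (gser (internals (m := k + 1)) (hookProd1 f) ^ k)) =
      gser (fun c : Fin k → MTree (k + 1) => ∑ i, (c i).internals)
        (fun c => f (1 + ∑ i, (c i).internals) * ∏ i, hookProd1 f (c i)) := by
    ext1 a
    rw [PowerSeries.coeff_mk, ← gser_pi _ _ hf, gser_coeff _ _ (fin_pi _ hf k),
      gser_coeff _ _ (fin_pi _ hf k), Finset.mul_sum]
    refine Finset.sum_congr rfl fun c hc => ?_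
    simp only [Set.Finite.mem_toFinset, Set.mem_ofPred_eq] at hc
    rw [hc]
  have hnode : gser (fun c : Fin k → MTree (k + 1) => ∑ i, (c i).internals)
        (fun c => f (1 + ∑ i, (c i).internals) * ∏ i, hookProd1 f (c i)) *
        gser (internals (m := k + 1)) (hookProd1 f) =
      gser (fun c : Fin (k + 1) → MTree (k + 1) => ∑ i, (c i).internals)
        (fun c => hookProd1 f (node c)) := by
    rw [← gser_prod _ _ _ _ (fin_pi _ hf k) hf, ← gser_equiv
      ((Equiv.prodComm _ _).trans (Fin.snocEquiv fun _ : Fin (k+1) => MTree (k + 1)))]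
    simp [Fin.snocEquiv, hookProd1, hook1_snoc, Fin.sum_univ_castSucc, Fin.prod_univ_castSucc,
      mul_assoc]
  rw [hB, hnode]
  ext1 n
  cases n with
  | zero =>
    have : {T : MTree (k + 1) | T.internals = 0} = {leaf} := by
      ext T; cases T <;> simp [internals]
    simp only [gser, PowerSeries.coeff_mk, this, finsum_mem_singleton]
    simp [hookProd1]
  | succ n =>
    rw [map_add, PowerSeries.coeff_succ_X_mul, PowerSeries.coeff_one]
    simp only [gser, PowerSeries.coeff_mk, Nat.succ_ne_zero, if_false, zero_add]
    symm
    refine finsum_mem_eq_of_bijOn node ⟨fun c hc => ?_, fun a _ b _ h => by simpa using h,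
      fun T hT => ?_⟩ (fun _ _ => rfl)
    · simp only [Set.mem_ofPred_eq, internals] at hc ⊢
      omega
    · cases T with
      | leaf => simp [internals] at hT
      | node c =>
        refine ⟨c, ?_, rfl⟩
        simp only [Set.mem_ofPred_eq, internals] at hT ⊢
        omega

end MTree

/-! ### Solving the differential equation -/

theorem coeff_X_mul_deriv {R : Type} [CommRing R] (F : PowerSeries R) (n : ℕ) :
    PowerSeries.coeff n (PowerSeries.X * PowerSeries.derivative R F) =
      n * PowerSeries.coeff n F := by
  cases n with
  | zero => simp
  | succ n =>
    rw [PowerSeries.coeff_succ_X_mul, PowerSeries.coeff_derivative]; push_cast; ring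

theorem ode_of_eq {R : Type} [CommRing R] (x : R) (e : ℕ → R)
    (he : ∀ n, e n * ((n : R) + 1) = 1) (k : ℕ) (G : PowerSeries R)
    (hG : G = 1 + PowerSeries.X * ((PowerSeries.mk fun a =>
      (x + e a) * PowerSeries.coeff a (G ^ k)) * G)) :
    PowerSeries.derivative R G = PowerSeries.C (x + 1) * G ^ (k + 2) +
      PowerSeries.C (x * (k : R)) * PowerSeries.X * G ^ (k + 1) *
        PowerSeries.derivative R G := by
  set B : PowerSeries R := (PowerSeries.mk fun a =>
      (x + e a) * PowerSeries.coeff a (G ^ k)) with hB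
  have hA : PowerSeries.derivative R (PowerSeries.X * B) = PowerSeries.C (x + 1) * G ^ k +
      PowerSeries.C x * (PowerSeries.X * PowerSeries.derivative R (G ^ k)) := by
    ext1 n
    rw [PowerSeries.coeff_derivative, PowerSeries.coeff_succ_X_mul, map_add,
      PowerSeries.coeff_C_mul, PowerSeries.coeff_C_mul, hB, PowerSeries.coeff_mk,
      coeff_X_mul_deriv]
    linear_combination (PowerSeries.coeff n (G ^ k)) * he n
  have hk : PowerSeries.derivative R (G ^ k) * G =
      (k : PowerSeries R) * G ^ k * PowerSeries.derivative R G := by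
    cases k with
    | zero => simp
    | succ k => rw [PowerSeries.derivative_pow]; simp; ring
  have hd : PowerSeries.derivative R G = PowerSeries.derivative R (PowerSeries.X * B) * G
      + PowerSeries.X * B * PowerSeries.derivative R G := by
    conv_lhs => rw [hG, ← mul_assoc]
    rw [map_add, Derivation.leibniz, PowerSeries.derivative_one]
    simp only [smul_eq_mul]
    ring
  have hc : PowerSeries.C (x * (k : R)) = PowerSeries.C x * (k : PowerSeries R) := by simp
  rw [hA] at hd
  rw [hc]
  linear_combination G * hd - PowerSeries.derivative R G * hG +
    PowerSeries.C x * PowerSeries.X * G * hk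

theorem rec_of_ode {R : Type} [CommRing R] (x : R) (k : ℕ) (G : PowerSeries R)
    (h : PowerSeries.derivative R G = PowerSeries.C (x + 1) * G ^ (k + 2) +
      PowerSeries.C (x * (k : R)) * PowerSeries.X * G ^ (k + 1) *
        PowerSeries.derivative R G)
    (r n : ℕ) :
    ((k : R) + 1 + (r + 1)) * (n + 1) * PowerSeries.coeff (n + 1) (G ^ (r + 1)) =
      (r + 1) * ((k + 1 + (r + 1)) * (x + 1) + x * k * n) *
        PowerSeries.coeff n (G ^ (k + 1 + (r + 1))) := by
  have h1 : PowerSeries.derivative R (G ^ (r + 1)) =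
      ((r : PowerSeries R) + 1) * G ^ r * PowerSeries.derivative R G := by
    rw [PowerSeries.derivative_pow]; simp
  have h2 : PowerSeries.derivative R (G ^ (k + 1 + (r + 1))) =
      ((k : PowerSeries R) + 1 + (r + 1)) * G ^ (k + 1 + r) * PowerSeries.derivative R G := by
    rw [PowerSeries.derivative_pow, ← add_assoc (k + 1) r 1, Nat.add_sub_cancel]
    push_cast; ring
  have h3 : PowerSeries.C ((k : R) + 1 + (r + 1)) * PowerSeries.derivative R (G ^ (r + 1)) =
      PowerSeries.C (((k : R) + 1 + (r + 1)) * (r + 1) * (x + 1)) *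
        G ^ (k + 1 + (r + 1)) +
      PowerSeries.C (((r : R) + 1) * (x * k)) *
        (PowerSeries.X * PowerSeries.derivative R (G ^ (k + 1 + (r + 1)))) := by
    rw [h1, h2]
    simp only [map_mul, map_add, map_natCast, map_one] at h ⊢
    linear_combination ((k : PowerSeries R) + 1 + (r + 1)) * (r + 1) * G ^ r * h
  have h5 := congrArg (PowerSeries.coeff n) h3
  rw [map_add (PowerSeries.coeff n), PowerSeries.coeff_C_mul, PowerSeries.coeff_C_mul, PowerSeries.coeff_C_mul,
    coeff_X_mul_deriv, PowerSeries.coeff_derivative] at h5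
  linear_combination h5

theorem coeff_of_rec {R : Type} [CommRing R] [IsDomain R] [CharZero R] (x : R)
    (k : ℕ) (G : PowerSeries R) (h0 : PowerSeries.coeff 0 G = 1)
    (h : ∀ r n : ℕ,
      ((k : R) + 1 + (r + 1)) * (n + 1) * PowerSeries.coeff (n + 1) (G ^ (r + 1)) =
      (r + 1) * ((k + 1 + (r + 1)) * (x + 1) + x * k * n) *
        PowerSeries.coeff n (G ^ (k + 1 + (r + 1)))) (n : ℕ) : ∀ r : ℕ,
    ((n + 1).factorial : R) * PowerSeries.coeff (n + 1) (G ^ (r + 1)) =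
      (r + 1) * (x + 1) * ∏ i ∈ Finset.Icc 1 n,
        ((((k : R) + 1) * ((n : R) + 1) + ((r : R) + 1)) * (x + 1)
          - (i : R) * (x + 1 + (k : R))) := by
  induction n with
  | zero =>
    intro r
    have h1 := h r 0
    have h2 : PowerSeries.coeff 0 (G ^ (k + 1 + (r + 1))) = 1 := by
      simp only [PowerSeries.coeff_zero_eq_constantCoeff, map_pow] at h0 ⊢
      rw [h0, one_pow]
    rw [h2] at h1
    have hne : ((k : R) + 1 + (r + 1)) ≠ 0 := by
      have : (((k + 1 + (r + 1) : ℕ)) : R) ≠ 0 := Nat.cast_ne_zero.mpr (by omega)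
      exact_mod_cast this
    apply mul_left_cancel₀ hne
    simp only [Nat.factorial_one, zero_add, Nat.cast_one, Nat.cast_zero] at h1 ⊢
    rw [Finset.Icc_eq_empty (by omega), Finset.prod_empty]
    linear_combination h1
  | succ n ih =>
    intro r
    have h1 := h r (n + 1)
    have h2 := ih (k + 1 + r)
    have hne : ((k : R) + 1 + (r + 1)) ≠ 0 := by
      have : (((k + 1 + (r + 1) : ℕ)) : R) ≠ 0 := Nat.cast_ne_zero.mpr (by omega)
      exact_mod_cast this
    apply mul_left_cancel₀ hne
    rw [Finset.prod_Icc_succ_top (by omega), Nat.factorial_succ]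
    have h3 : ∏ i ∈ Finset.Icc 1 n, ((((k : R) + 1) * (((n + 1 : ℕ) : R) + 1) + ((r : R) + 1)) *
        (x + 1) - (i : R) * (x + 1 + (k : R))) =
        ∏ i ∈ Finset.Icc 1 n, ((((k : R) + 1) * ((n : R) + 1) + (((k + 1 + r : ℕ) : R) + 1)) *
        (x + 1) - (i : R) * (x + 1 + (k : R))) := by
      refine Finset.prod_congr rfl fun i _ => ?_
      push_cast; ring
    rw [h3]
    rw [add_assoc (k + 1) r 1] at h2
    push_cast at h1 h2 ⊢
    linear_combination ((n + 1).factorial : R) * h1 +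
      (r + 1) * ((k + 1 + (r + 1)) * (x + 1) + x * k * (n + 1)) * h2

/-- **Theorem 1.1, first form (Sun–Zhang).**  For `m ≥ 2` and `n ≥ 1`,
`∑_{T ∈ 𝒯_{n,m}} ∏_{v ∈ 𝓘(T)} (x + 1/𝓗_v)
  = ((x+1)/n!) ∏_{i=1}^{n-1} ((mn+1-i)(x+1) - (m-1)i)` in `ℚ[x]`. -/
theorem hook_length_formula_first_kind (m n : ℕ) (hm : 2 ≤ m) (hn : 1 ≤ n) :
    (∑ᶠ T ∈ {T : MTree m | T.internals = n},
        MTree.hookProd1 (fun h => (X : ℚ[X]) + C ((h : ℚ)⁻¹)) T)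
      = C ((n.factorial : ℚ)⁻¹) * ((X : ℚ[X]) + 1) *
          ∏ i ∈ Finset.Icc 1 (n - 1),
            (C ((m : ℚ) * n + 1 - (i : ℚ)) * ((X : ℚ[X]) + 1) -
              C (((m : ℚ) - 1) * (i : ℚ))) := by
  obtain ⟨k, rfl⟩ : ∃ k, m = k + 1 := ⟨m - 1, by omega⟩
  obtain ⟨n, rfl⟩ : ∃ j, n = j + 1 := ⟨n - 1, by omega⟩
  set G := gser (MTree.internals (m := k + 1))
    (MTree.hookProd1 (fun h => (X : ℚ[X]) + C ((h : ℚ)⁻¹))) with hGdef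
  have hG := MTree.gser_tree k (fun h => (X : ℚ[X]) + C ((h : ℚ)⁻¹))
  rw [← hGdef] at hG
  have h0 : PowerSeries.coeff 0 G = 1 := by
    rw [hG]; simp
  have he : ∀ n : ℕ, C (((1 + n : ℕ) : ℚ)⁻¹) * ((n : ℚ[X]) + 1) = 1 := by
    intro n
    have : ((n : ℚ[X]) + 1) = C ((1 + n : ℕ) : ℚ) := by
      simp [add_comm]
    rw [this, ← Polynomial.C_mul, inv_mul_cancel₀ (by positivity), Polynomial.C_1]
  have key := coeff_of_rec (X : ℚ[X]) k G h0
    (rec_of_ode _ k G (ode_of_eq _ (fun n => C (((1 + n : ℕ) : ℚ)⁻¹)) he k G hG)) n 0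
  have hL : (∑ᶠ T ∈ {T : MTree (k + 1) | T.internals = n + 1},
        MTree.hookProd1 (fun h => (X : ℚ[X]) + C ((h : ℚ)⁻¹)) T) =
      PowerSeries.coeff (n + 1) G := by
    rw [hGdef, gser, PowerSeries.coeff_mk]
  rw [hL]
  have hf : C (((n + 1).factorial : ℚ)⁻¹) * ((n + 1).factorial : ℚ[X]) = 1 := by
    rw [← Polynomial.C_eq_natCast, ← Polynomial.C_mul, inv_mul_cancel₀ (by positivity),
      Polynomial.C_1]
  have hp : ∏ i ∈ Finset.Icc 1 (n + 1 - 1),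
            (C (((k + 1 : ℕ) : ℚ) * (n + 1 : ℕ) + 1 - (i : ℚ)) * ((X : ℚ[X]) + 1) -
              C ((((k + 1 : ℕ) : ℚ) - 1) * (i : ℚ))) =
      ∏ i ∈ Finset.Icc 1 n, ((((k : ℚ[X]) + 1) * ((n : ℚ[X]) + 1) + (((0 : ℕ) : ℚ[X]) + 1))
          * ((X : ℚ[X]) + 1) - (i : ℚ[X]) * (X + 1 + (k : ℚ[X]))) := by
    refine Finset.prod_congr rfl fun i _ => ?_
    simp only [map_mul, map_add, map_sub, map_natCast, map_one]
    push_cast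
    ring
  rw [hp, mul_assoc]
  rw [zero_add, pow_one] at key
  simp only [Nat.cast_zero, zero_add, one_mul] at key ⊢
  rw [← key, ← mul_assoc, hf, one_mul]
end

section
/- For any integers m ≥ 2 and n ≥ 1, the sum over all complete m-ary trees T with n internal vertices of the product over all internal vertices v of T of ((m·𝓗_v − 1)x − 𝓗_v + 1)/((m−1)·𝓗_v) equals (1/(mn+1)) · C((mn+1)x, n), as an identity of polynomials in x over ℚ. -/
open Polynomial Finset

namespace HookAux

/-- Gould-type polynomials `p/(p+qn) * C(p+qn,n)` in the variable `p`. -/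
noncomputable def AP (q : ℚ) : ℕ → ℚ[X]
  | 0 => 1
  | n + 1 => C (((n + 1).factorial : ℚ)⁻¹) * X *
      ∏ j ∈ Finset.range n, (X + C (q * ((n : ℚ) + 1) - ((j : ℚ) + 1)))

/-- Values of the Gould-type polynomials. -/
noncomputable def A (q : ℚ) (n : ℕ) (p : ℚ) : ℚ := (AP q n).eval p

lemma A_zero (q p : ℚ) : A q 0 p = 1 := by simp [A, AP]

lemma A_succ (q p : ℚ) (n : ℕ) : A q (n + 1) p = ((n + 1).factorial : ℚ)⁻¹ * p *
    ∏ j ∈ Finset.range n, (p + (q * ((n : ℚ) + 1) - ((j : ℚ) + 1))) := by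
  simp [A, AP, eval_prod]

lemma A_succ_at_zero (q : ℚ) (n : ℕ) : A q (n + 1) 0 = 0 := by
  simp [A_succ]

lemma A_diff (q p : ℚ) (n : ℕ) : A q (n + 1) (p + 1) = A q (n + 1) p + A q n (p + q) := by
  cases n with
  | zero => simp [A_succ, A_zero]
  | succ k =>
    rw [A_succ, A_succ, A_succ, Finset.prod_range_succ', Finset.prod_range_succ]
    have h1 : ∀ j ∈ Finset.range k,
        (p + 1 + (q * (((k + 1 : ℕ) : ℚ) + 1) - (((j + 1 : ℕ) : ℚ) + 1)))
        = p + q + (q * ((k : ℚ) + 1) - ((j : ℚ) + 1)) := by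
      intro j _; push_cast; ring
    have h2 : ∀ j ∈ Finset.range k,
        (p + (q * (((k + 1 : ℕ) : ℚ) + 1) - ((j : ℚ) + 1)))
        = p + q + (q * ((k : ℚ) + 1) - ((j : ℚ) + 1)) := by
      intro j _; push_cast; ring
    rw [Finset.prod_congr rfl h1, Finset.prod_congr rfl h2]
    generalize ∏ j ∈ Finset.range k, (p + q + (q * ((k : ℚ) + 1) - ((j : ℚ) + 1))) = W
    rw [Nat.factorial_succ (k + 1)]
    have hf : (((k + 1).factorial : ℕ) : ℚ) ≠ 0 := by positivity
    have hk : ((k : ℚ) + 1 + 1) ≠ 0 := by positivity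
    push_cast
    field_simp
    ring

lemma A_conv (q : ℚ) (n : ℕ) : ∀ p s : ℚ,
    ∑ ij ∈ Finset.HasAntidiagonal.antidiagonal n, A q ij.1 p * A q ij.2 s = A q n (p + s) := by
  induction n with
  | zero => intro p s; simp [A_zero]
  | succ n ih =>
    intro p s
    have hnat : ∀ k : ℕ, ∑ ij ∈ Finset.HasAntidiagonal.antidiagonal (n + 1), A q ij.1 (k : ℚ) * A q ij.2 s
        = A q (n + 1) ((k : ℚ) + s) := by
      intro k
      induction k with
      | zero =>
        rw [Finset.Nat.antidiagonal_succ]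
        simp [A_zero, A_succ_at_zero]
      | succ k ihk =>
        rw [Finset.Nat.antidiagonal_succ] at ihk ⊢
        simp only [Finset.sum_cons, Finset.sum_map, Function.Embedding.prodMap,
          Function.Embedding.coeFn_mk, Prod.map, A_zero, Function.Embedding.refl_apply,
          Nat.succ_eq_add_one] at ihk ⊢
        push_cast
        simp only [A_diff, add_mul, Finset.sum_add_distrib]
        rw [ih, ← add_assoc, ihk]
        rw [show (k : ℚ) + 1 + s = (k + s) + 1 by ring, A_diff]
        congr 2
        ring
    have hpoly : (∑ ij ∈ Finset.HasAntidiagonal.antidiagonal (n + 1), AP q ij.1 * C (A q ij.2 s))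
        = (AP q (n + 1)).comp (X + C s) := by
      apply Polynomial.eq_of_infinite_eval_eq
      apply Set.Infinite.mono (s := Set.range (fun k : ℕ => (k : ℚ)))
      · rintro _ ⟨k, rfl⟩
        have := hnat k
        simpa [eval_finsetSum, A] using this
      · exact Set.infinite_range_of_injective Nat.cast_injective
    have := congrArg (Polynomial.eval p) hpoly
    simpa [eval_finsetSum, A] using this

lemma A_hook (M i : ℕ) (hM : 1 ≤ M) (x : ℚ) :
    ((((M + 1 : ℕ) : ℚ) - 1) * ((1 + i : ℕ) : ℚ))⁻¹ *
      ((((M + 1 : ℕ) : ℚ) * ((1 + i : ℕ) : ℚ) - 1) * x - (((1 + i : ℕ) : ℚ) - 1)) *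
      A (((M + 1 : ℕ) : ℚ) * x) i (M * x) = - A (((M + 1 : ℕ) : ℚ) * x) (i + 1) (-x) := by
  have hM0 : (M : ℚ) ≠ 0 := by positivity
  cases i with
  | zero =>
    simp only [A_succ, A_zero]
    simp
    field_simp
  | succ k =>
    rw [A_succ, A_succ, Finset.prod_range_succ]
    have h2 : ∀ j ∈ Finset.range k,
        (-x + (((M + 1 : ℕ) : ℚ) * x * (((k + 1 : ℕ) : ℚ) + 1) - ((j : ℚ) + 1)))
        = M * x + (((M + 1 : ℕ) : ℚ) * x * ((k : ℚ) + 1) - ((j : ℚ) + 1)) := by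
      intro j _; push_cast; ring
    rw [Finset.prod_congr rfl h2]
    generalize ∏ j ∈ Finset.range k,
      (M * x + (((M + 1 : ℕ) : ℚ) * x * ((k : ℚ) + 1) - ((j : ℚ) + 1))) = W
    rw [Nat.factorial_succ (k + 1)]
    have hf : (((k + 1).factorial : ℕ) : ℚ) ≠ 0 := by positivity
    have hk : ((k : ℚ) + 1 + 1) ≠ 0 := by positivity
    have hk' : (1 + ((k : ℚ) + 1)) ≠ 0 := by positivity
    push_cast
    rw [add_sub_cancel_right]
    field_simp
    ring

lemma finite_le (m n : ℕ) : {T : MTree m | T.internals ≤ n}.Finite := by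
  induction n with
  | zero =>
    apply (Set.finite_singleton (MTree.leaf : MTree m)).subset
    intro T hT
    cases T with
    | leaf => rfl
    | node c => simp [MTree.internals] at hT
  | succ n ih =>
    have hpi : (Set.pi Set.univ (fun _ : Fin m => {T : MTree m | T.internals ≤ n})).Finite :=
      Set.Finite.pi' (fun _ => ih) |>.subset (by intro c hc i; exact hc i trivial)
    apply ((Set.finite_singleton (MTree.leaf : MTree m)).union (hpi.image MTree.node)).subset
    intro T hT
    cases T with
    | leaf => left; rfl
    | node c =>
      right
      refine ⟨c, ?_, rfl⟩
      intro i _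
      simp only [Set.mem_ofPred_eq, MTree.internals] at hT ⊢
      have := Finset.single_le_sum (f := fun i => (c i).internals) (fun _ _ => Nat.zero_le _)
        (Finset.mem_univ i)
      omega

lemma finite_eq (m n : ℕ) : {T : MTree m | T.internals = n}.Finite :=
  (finite_le m n).subset (fun _ h => le_of_eq h)

lemma finite_forest (m k n : ℕ) : {c : Fin k → MTree m | ∑ i, (c i).internals = n}.Finite := by
  apply (Set.Finite.pi' (fun _ : Fin k => finite_le m n)).subset
  intro c hc i
  have := Finset.single_le_sum (f := fun i => (c i).internals) (fun _ _ => Nat.zero_le _)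
        (Finset.mem_univ i)
  simp only [Set.mem_ofPred_eq] at this hc ⊢
  omega

/-- Trees with `n` internal vertices. -/
noncomputable def S (m n : ℕ) : Finset (MTree m) := (finite_eq m n).toFinset

/-- Forests of `k` trees with `n` internal vertices in total. -/
noncomputable def Fo (m k n : ℕ) : Finset (Fin k → MTree m) := (finite_forest m k n).toFinset

lemma mem_S {m n : ℕ} {T : MTree m} : T ∈ S m n ↔ T.internals = n := by simp [S]

lemma mem_Fo {m k n : ℕ} {c : Fin k → MTree m} : c ∈ Fo m k n ↔ ∑ i, (c i).internals = n := by
  simp [Fo]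

lemma sum_Fo_succ (m k n : ℕ) (g : (Fin k → MTree m) → MTree m → ℚ) :
    ∑ c ∈ Fo m (k + 1) n, g (Fin.init c) (c (Fin.last k)) =
      ∑ ij ∈ Finset.HasAntidiagonal.antidiagonal n, ∑ c ∈ Fo m k ij.1, ∑ T ∈ S m ij.2, g c T := by
  simp_rw [← Finset.sum_product']
  rw [Finset.sum_sigma']
  symm
  refine Finset.sum_bij' (i := fun z _ => (Fin.snoc z.2.1 z.2.2 : Fin (k + 1) → MTree m))
    (j := fun c _ => ⟨(∑ i, (Fin.init c i : MTree m).internals,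
      (c (Fin.last k)).internals), (Fin.init c, c (Fin.last k))⟩) ?_ ?_ ?_ ?_ ?_
  · rintro ⟨⟨i, j⟩, ⟨c, T⟩⟩ h
    simp only [Finset.mem_sigma, Finset.HasAntidiagonal.mem_antidiagonal, Finset.mem_product, mem_S, mem_Fo] at h ⊢
    rw [Fin.sum_univ_castSucc]
    simp only [Fin.snoc_castSucc, Fin.snoc_last]
    omega
  · intro c h
    simp only [Finset.mem_sigma, Finset.HasAntidiagonal.mem_antidiagonal, Finset.mem_product, mem_S, mem_Fo] at h ⊢
    rw [Fin.sum_univ_castSucc] at h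
    simpa [Fin.init] using h
  · rintro ⟨⟨i, j⟩, ⟨c, T⟩⟩ h
    simp only [Finset.mem_sigma, Finset.HasAntidiagonal.mem_antidiagonal, Finset.mem_product, mem_S, mem_Fo] at h
    obtain ⟨_, rfl, rfl⟩ := h
    simp
  · intro c h
    simp
  · rintro ⟨⟨i, j⟩, ⟨c, T⟩⟩ h
    simp

lemma S_zero (m : ℕ) : S m 0 = {MTree.leaf} := by
  ext T
  cases T <;> simp [mem_S, MTree.internals]

lemma hook_eq (M : ℕ) (c : Fin (M + 1) → MTree (M + 1)) :
    MTree.hook1 c = 1 + ∑ i, (Fin.init c i : MTree (M + 1)).internals := by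
  unfold MTree.hook1
  rw [Finset.sum_filter, Fin.sum_univ_castSucc]
  simp [Fin.init]

lemma sum_S_succ (m n : ℕ) (g : MTree m → ℚ) :
    ∑ T ∈ S m (n + 1), g T = ∑ c ∈ Fo m m n, g (MTree.node c) := by
  symm
  apply Finset.sum_bij (i := fun c _ => MTree.node c)
  · intro c h
    simp only [mem_S, mem_Fo, MTree.internals] at h ⊢
    omega
  · intro c _ d _ h
    exact MTree.node.inj h
  · intro T hT
    cases T with
    | leaf => simp [mem_S, MTree.internals] at hT
    | node c =>
      refine ⟨c, ?_, rfl⟩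
      simp only [mem_S, mem_Fo, MTree.internals] at hT ⊢
      omega
  · intros; rfl

lemma forest_sum (m n : ℕ) (w : MTree m → ℚ) (q x : ℚ)
    (h : ∀ l ≤ n, ∑ T ∈ S m l, w T = A q l x) (k : ℕ) :
    ∀ i ≤ n, ∑ c ∈ Fo m k i, ∏ j, w (c j) = A q i (k * x) := by
  induction k with
  | zero =>
    intro i _
    cases i with
    | zero =>
      have : Fo m 0 0 = {default} := by
        ext c; simp [mem_Fo, Subsingleton.elim c default]
      simp [this, A_zero]
    | succ i =>
      have : Fo m 0 (i + 1) = ∅ := by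
        ext c; simp [mem_Fo]
      simp [this, A_succ_at_zero]
  | succ k ih =>
    intro i hi
    have := sum_Fo_succ m k i (fun c T => (∏ j, w (c j)) * w T)
    simp_rw [Fin.prod_univ_castSucc]
    refine this.trans ?_
    push_cast
    rw [add_mul, one_mul, ← A_conv]
    apply Finset.sum_congr rfl
    rintro ⟨a, b⟩ hab
    rw [Finset.HasAntidiagonal.mem_antidiagonal] at hab
    simp only at hab ⊢
    rw [← ih a (by omega), ← h b (by omega), Finset.sum_mul_sum]

lemma tree_sum (M : ℕ) (hM : 1 ≤ M) (x : ℚ) (f : ℕ → ℚ)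
    (hf : ∀ i, f (1 + i) = ((((M + 1 : ℕ) : ℚ) - 1) * ((1 + i : ℕ) : ℚ))⁻¹ *
      ((((M + 1 : ℕ) : ℚ) * ((1 + i : ℕ) : ℚ) - 1) * x - (((1 + i : ℕ) : ℚ) - 1))) (n : ℕ) :
    ∑ T ∈ S (M + 1) n, MTree.hookProd1 f T = A (((M + 1 : ℕ) : ℚ) * x) n x := by
  induction n using Nat.strong_induction_on with
  | _ n ih =>
  cases n with
  | zero => simp [S_zero, MTree.hookProd1, A_zero]
  | succ n =>
    have ih' : ∀ l ≤ n, ∑ T ∈ S (M + 1) l, MTree.hookProd1 f T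
        = A (((M + 1 : ℕ) : ℚ) * x) l x := fun l hl => ih l (by omega)
    have hfo := forest_sum (M + 1) n (MTree.hookProd1 f) _ x ih' M
    rw [sum_S_succ]
    have key := sum_Fo_succ (M + 1) M n (fun c T =>
      f (1 + ∑ i, (c i).internals) * ((∏ j, MTree.hookProd1 f (c j)) * MTree.hookProd1 f T))
    have e : ∑ c ∈ Fo (M + 1) (M + 1) n, MTree.hookProd1 f (MTree.node c) =
        ∑ c ∈ Fo (M + 1) (M + 1) n, f (1 + ∑ i, (Fin.init c i : MTree (M + 1)).internals) *
          ((∏ j, MTree.hookProd1 f (Fin.init c j : MTree (M + 1))) *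
            MTree.hookProd1 f (c (Fin.last M))) := by
      apply Finset.sum_congr rfl
      intro c _
      rw [MTree.hookProd1, hook_eq, Fin.prod_univ_castSucc]
      rfl
    refine (e.trans key).trans ?_
    have conv := A_conv (((M + 1 : ℕ) : ℚ) * x) (n + 1) (-x) x
    rw [neg_add_cancel, A_succ_at_zero, Finset.Nat.antidiagonal_succ] at conv
    simp only [Finset.sum_cons, Finset.sum_map, Function.Embedding.prodMap,
          Function.Embedding.coeFn_mk, Prod.map, A_zero, Function.Embedding.refl_apply,
          Nat.succ_eq_add_one, one_mul] at conv
    rw [eq_neg_of_add_eq_zero_left conv, ← Finset.sum_neg_distrib]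
    apply Finset.sum_congr rfl
    rintro ⟨a, b⟩ hab
    rw [Finset.HasAntidiagonal.mem_antidiagonal] at hab
    simp only at hab ⊢
    rw [← neg_mul, ← A_hook M a hM, ← hf, ← hfo a (by omega), ← ih' b (by omega), mul_assoc,
      Finset.sum_mul_sum, Finset.mul_sum]
    apply Finset.sum_congr rfl
    intro c hc
    rw [mem_Fo] at hc
    rw [Finset.mul_sum, hc]

lemma eval_hookProd {m : ℕ} (f : ℕ → ℚ[X]) (x : ℚ) (T : MTree m) :
    (MTree.hookProd1 f T).eval x = MTree.hookProd1 (fun h => (f h).eval x) T := by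
  induction T with
  | leaf => simp [MTree.hookProd1]
  | node c ih => simp [MTree.hookProd1, eval_prod, ih]

end HookAux

/-- **Theorem 1.1, second form (Sun–Zhang).**  For `m ≥ 2` and `n ≥ 1`,
`∑_{T ∈ 𝒯_{n,m}} ∏_{v ∈ 𝓘(T)} ((m𝓗_v - 1)x - 𝓗_v + 1)/((m-1)𝓗_v)
  = (1/(mn+1)) ⬝ C((mn+1)x, n)` in `ℚ[x]`, where
`C(y,n) = y(y-1)⋯(y-n+1)/n!`. -/
theorem hook_length_formula_first_kind' (m n : ℕ) (hm : 2 ≤ m) (hn : 1 ≤ n) :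
    (∑ᶠ T ∈ {T : MTree m | T.internals = n},
        MTree.hookProd1 (fun h =>
          C ((((m : ℚ) - 1) * (h : ℚ))⁻¹) *
            (C ((m : ℚ) * (h : ℚ) - 1) * (X : ℚ[X]) - C ((h : ℚ) - 1))) T)
      = C (((m : ℚ) * n + 1)⁻¹ * (n.factorial : ℚ)⁻¹) *
          ∏ j ∈ Finset.range n,
            (C ((m : ℚ) * n + 1) * (X : ℚ[X]) - C (j : ℚ)) := by
  obtain ⟨M, rfl⟩ : ∃ M, m = M + 1 := ⟨m - 1, by omega⟩
  obtain ⟨k, rfl⟩ : ∃ k, n = k + 1 := ⟨n - 1, by omega⟩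
  rw [finsum_mem_eq_finite_toFinset_sum _ (HookAux.finite_eq (M + 1) (k + 1))]
  apply Polynomial.funext
  intro x
  rw [eval_finsetSum]
  simp_rw [HookAux.eval_hookProd]
  have h := HookAux.tree_sum M (by omega) x
    (fun h => (C (((((M + 1 : ℕ) : ℚ) - 1) * (h : ℚ))⁻¹) *
      (C (((M + 1 : ℕ) : ℚ) * (h : ℚ) - 1) * (X : ℚ[X]) - C ((h : ℚ) - 1))).eval x)
    (by intro i; simp only [eval_mul, eval_sub, eval_C, eval_X]) (k + 1)
  refine Eq.trans h ?_
  rw [HookAux.A_succ, Finset.prod_range_succ']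
  simp only [eval_mul, eval_sub, eval_C, eval_X, eval_prod]
  have hp : ∀ j ∈ Finset.range k,
      (((M + 1 : ℕ) : ℚ) * ((k + 1 : ℕ) : ℚ) + 1) * x - ((j + 1 : ℕ) : ℚ)
      = x + (((M + 1 : ℕ) : ℚ) * x * ((k : ℚ) + 1) - ((j : ℚ) + 1)) := by
    intro j _; push_cast; ring
  rw [Finset.prod_congr rfl hp]
  have h0 : (((M + 1 : ℕ) : ℚ) * ((k + 1 : ℕ) : ℚ) + 1) ≠ 0 := by positivity
  have hf : (((k + 1).factorial : ℕ) : ℚ) ≠ 0 := by positivity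
  generalize ∏ j ∈ Finset.range k,
    (x + (((M + 1 : ℕ) : ℚ) * x * ((k : ℚ) + 1) - ((j : ℚ) + 1))) = W
  generalize (((M + 1 : ℕ) : ℚ) * ((k + 1 : ℕ) : ℚ) + 1) = D at *
  rw [Nat.cast_zero, sub_zero]
  field_simp
end
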